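/- Let μ > 0 and λ > 0 be such that the supremum of E[U(X)] − μ·h(X) − λ·E[ρX] over X ∈ L⁰₊ is finite. If X* ∈ L⁰₊ maximizes E[U(X)] − μ·h(X) − λ·E[ρX] over X ∈ L⁰₊, then X* > 0 a.s. -/

import Mathlib

/-!
A maximizer `X` that vanishes on a non-null set `A = {X ≤ 0}` is improved by raising it to a small
constant `ε > 0` on `A`. Finiteness of the supremum forces `U ∘ X` and `ρ X` to be integrable
(`integrable_of_fullObj_eq_coe`), so the objective at `X` and at the perturbation `Y` is an honest
real number (`fullObj_eq_coe`). The risk term can only improve, because `h` is antitone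
(`werm_anti`). The cost term grows by at most `ε * λ * E[ρ]`, while expected utility grows by
`P(A) * (U ε - U 0)`. By the mean value theorem and the Inada condition `U'(0+) = ∞`, the latter
dominates for small `ε` (`exists_slope_gt`), contradicting optimality.
-/
open MeasureTheory Filter Set
open scoped ENNReal

noncomputable section

variable {Ω : Type*} [MeasurableSpace Ω]

/-- Entropic risk measure `h_a(X) = (1/a) log E[e^{-aX}]`. -/
def entropic (P : Measure Ω) (a : ℝ) (X : Ω → ℝ) : ℝ :=
  (1 / a) * Real.log (∫ ω, Real.exp (-a * X ω) ∂P)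

/-- Weighted entropic risk measure `h(X) = ∫_{[a₀,a₁]} h_a(X) m(da)`. -/
def werm (P : Measure Ω) (m : Measure ℝ) (a₀ a₁ : ℝ) (X : Ω → ℝ) : ℝ :=
  ∫ a in Set.Icc a₀ a₁, entropic P a X ∂m

/-- Marginal risk density transform `h′(X) = -∫_{[a₀,a₁]} e^{-aX}/E[e^{-aX}] m(da)`. -/
def hprime (P : Measure Ω) (m : Measure ℝ) (a₀ a₁ : ℝ) (X : Ω → ℝ) (ω : Ω) : ℝ :=
  -∫ a in Set.Icc a₀ a₁, Real.exp (-a * X ω) / (∫ ω', Real.exp (-a * X ω') ∂P) ∂m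

/-- Extended-real-valued expectation `E[f] = ∫ f⁺ - ∫ f⁻ ∈ [-∞,∞]`. -/
def eint (P : Measure Ω) (f : Ω → ℝ) : EReal :=
  ((∫⁻ ω, ENNReal.ofReal (f ω) ∂P : ℝ≥0∞) : EReal)
    - ((∫⁻ ω, ENNReal.ofReal (-(f ω)) ∂P : ℝ≥0∞) : EReal)

/-- `E[ρX] ∈ [0,∞]` for a nonnegative payoff. -/
def budget (P : Measure Ω) (ρ X : Ω → ℝ) : ℝ≥0∞ := ∫⁻ ω, ENNReal.ofReal (ρ ω * X ω) ∂P

/-- `X ∈ L⁰₊`: a nonnegative random variable. -/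
def Lpos (P : Measure Ω) (X : Ω → ℝ) : Prop := Measurable X ∧ ∀ᵐ ω ∂P, 0 ≤ X ω

/-- Objective of the Lagrangian risk-minimization problem: `h(X) + λ E[ρX]`. -/
def robj (P : Measure Ω) (m : Measure ℝ) (a₀ a₁ : ℝ) (ρ : Ω → ℝ) (lam : ℝ) (X : Ω → ℝ) : EReal :=
  ((werm P m a₀ a₁ X : ℝ) : EReal) + (lam : EReal) * ((budget P ρ X : ℝ≥0∞) : EReal)

/-- `ψ_X(y) = ∫_{[a₀,a₁]} e^{-ay} / E[e^{-aX}] m(da)`. -/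
def psi (P : Measure Ω) (m : Measure ℝ) (a₀ a₁ : ℝ) (X : Ω → ℝ) (y : ℝ) : ℝ :=
  ∫ a in Set.Icc a₀ a₁, Real.exp (-a * y) / (∫ ω, Real.exp (-a * X ω) ∂P) ∂m

/-- Inverse of `ψ_X` on `(0,∞)` (realized via `sSup`, since `ψ_X` is continuous, strictly
decreasing with limits `∞` at `-∞` and `0` at `∞`). -/
def psiInv (P : Measure Ω) (m : Measure ℝ) (a₀ a₁ : ℝ) (X : Ω → ℝ) (z : ℝ) : ℝ :=
  sSup {y : ℝ | z ≤ psi P m a₀ a₁ X y}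

/-- The transform `𝐓X = max(ψ_X⁻¹(λρ), 0)`. -/
def Ttrans (P : Measure Ω) (m : Measure ℝ) (a₀ a₁ lam : ℝ) (ρ : Ω → ℝ) (X : Ω → ℝ) : Ω → ℝ :=
  fun ω => max (psiInv P m a₀ a₁ X (lam * ρ ω)) 0

/-- `X ∈ 𝒳(x)`: nonnegative and `E[ρX] ≤ x`. -/
def feasible (P : Measure Ω) (ρ : Ω → ℝ) (x : ℝ) (X : Ω → ℝ) : Prop :=
  Lpos P X ∧ budget P ρ X ≤ ENNReal.ofReal x

/-- `γ₁(x)`: the minimal value of `h` over `𝒳(x)`. -/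
def gamma1 (P : Measure Ω) (m : Measure ℝ) (a₀ a₁ : ℝ) (ρ : Ω → ℝ) (x : ℝ) : ℝ :=
  sInf (werm P m a₀ a₁ '' {X | feasible P ρ x X})

/-- Expected utility `E[U(X)] ∈ [-∞,∞]`. -/
def eutil (P : Measure Ω) (U : ℝ → ℝ) (X : Ω → ℝ) : EReal := eint P (fun ω => U (X ω))

/-- Full Lagrangian objective `E[U(X)] - μ h(X) - λ E[ρX]`. -/
def fullObj (P : Measure Ω) (m : Measure ℝ) (a₀ a₁ : ℝ) (ρ : Ω → ℝ) (U : ℝ → ℝ)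
    (μ lam : ℝ) (X : Ω → ℝ) : EReal :=
  eutil P U X - ((μ * werm P m a₀ a₁ X : ℝ) : EReal)
    - (lam : EReal) * ((budget P ρ X : ℝ≥0∞) : EReal)


lemma integrable_exp_neg_mul (P : Measure Ω) [IsProbabilityMeasure P] {X : Ω → ℝ}
    (hX : Lpos P X) {a : ℝ} (ha : 0 ≤ a) : Integrable (fun ω => Real.exp (-a * X ω)) P := by
  refine Integrable.of_bound (C := 1) (by have := hX.1; fun_prop) ?_
  filter_upwards [hX.2] with ω h
  rw [Real.norm_eq_abs, Real.abs_exp, Real.exp_le_one_iff]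
  nlinarith

lemma integral_exp_pos (P : Measure Ω) [IsProbabilityMeasure P] {X : Ω → ℝ}
    (hX : Lpos P X) {a : ℝ} (ha : 0 ≤ a) : 0 < ∫ ω, Real.exp (-a * X ω) ∂P :=
  MeasureTheory.integral_exp_pos (integrable_exp_neg_mul P hX ha)

lemma entropic_nonpos (P : Measure Ω) [IsProbabilityMeasure P] {X : Ω → ℝ}
    (hX : Lpos P X) {a : ℝ} (ha : 0 ≤ a) : entropic P a X ≤ 0 := by
  refine mul_nonpos_of_nonneg_of_nonpos (by positivity) (Real.log_nonpos ?_ ?_)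
  · exact (integral_exp_pos P hX ha).le
  · calc ∫ ω, Real.exp (-a * X ω) ∂P ≤ ∫ ω, (1 : ℝ) ∂P := by
          refine integral_mono_ae (integrable_exp_neg_mul P hX ha) (integrable_const _) ?_
          filter_upwards [hX.2] with ω h
          rw [Real.exp_le_one_iff]
          nlinarith
      _ = 1 := by simp

lemma entropic_anti (P : Measure Ω) [IsProbabilityMeasure P] {X Y : Ω → ℝ}
    (hX : Lpos P X) (hY : Lpos P Y) (hXY : ∀ᵐ ω ∂P, X ω ≤ Y ω) {a : ℝ} (ha : 0 ≤ a) :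
    entropic P a Y ≤ entropic P a X := by
  refine mul_le_mul_of_nonneg_left (Real.log_le_log (integral_exp_pos P hY ha) ?_) (by positivity)
  refine integral_mono_ae (integrable_exp_neg_mul P hY ha) (integrable_exp_neg_mul P hX ha) ?_
  filter_upwards [hXY] with ω h
  rw [Real.exp_le_exp]
  nlinarith

/-- On `[a₀, a₁]` the entropic risk is bounded in absolute value by `(1/a₀) |log E[e^{-a₁X}]|`,
so the integral defining `werm` is a genuine one. -/
lemma integrableOn_entropic (P : Measure Ω) [IsProbabilityMeasure P] {a₀ a₁ : ℝ} (ha₀ : 0 < a₀)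
    (m : Measure ℝ) [IsProbabilityMeasure m] {X : Ω → ℝ} (hX : Lpos P X) :
    IntegrableOn (fun a => entropic P a X) (Set.Icc a₀ a₁) m := by
  have hmeas : Measurable fun a => entropic P a X := by
    have h1 : StronglyMeasurable fun a : ℝ => ∫ ω, Real.exp (-a * X ω) ∂P := by
      refine StronglyMeasurable.integral_prod_right
        (f := fun (a : ℝ) (ω : Ω) => Real.exp (-a * X ω)) (Measurable.stronglyMeasurable ?_)
      have := hX.1
      simp only [Function.uncurry_def]
      fun_prop
    have h2 := h1.measurable
    unfold entropic
    fun_prop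
  refine Integrable.of_bound (C := 1 / a₀ * -Real.log (∫ ω, Real.exp (-a₁ * X ω) ∂P))
    hmeas.aestronglyMeasurable ?_
  filter_upwards [ae_restrict_mem measurableSet_Icc] with a ha
  have ha' : 0 < a := ha₀.trans_le ha.1
  have ha1 : 0 < a₁ := ha'.trans_le ha.2
  rw [Real.norm_eq_abs, abs_of_nonpos (entropic_nonpos P hX ha'.le), entropic, ← mul_neg]
  have hle : Real.log (∫ ω, Real.exp (-a₁ * X ω) ∂P) ≤ Real.log (∫ ω, Real.exp (-a * X ω) ∂P) := by
    refine Real.log_le_log (integral_exp_pos P hX ha1.le) ?_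
    refine integral_mono_ae (integrable_exp_neg_mul P hX ha1.le)
      (integrable_exp_neg_mul P hX ha'.le) ?_
    filter_upwards [hX.2] with ω h
    rw [Real.exp_le_exp]
    nlinarith [ha.2]
  have hneg : 0 ≤ -Real.log (∫ ω, Real.exp (-a * X ω) ∂P) := by
    have h := entropic_nonpos P hX ha'.le
    rw [entropic] at h
    by_contra! hc
    have : 0 < 1 / a * Real.log (∫ ω, Real.exp (-a * X ω) ∂P) :=
      mul_pos (by positivity) (by linarith)
    linarith
  exact mul_le_mul (one_div_le_one_div_of_le ha₀ ha.1) (by linarith) hneg (by positivity)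

lemma werm_anti (P : Measure Ω) [IsProbabilityMeasure P] {a₀ a₁ : ℝ} (ha₀ : 0 < a₀)
    (m : Measure ℝ) [IsProbabilityMeasure m] {X Y : Ω → ℝ}
    (hX : Lpos P X) (hY : Lpos P Y) (hXY : ∀ᵐ ω ∂P, X ω ≤ Y ω) :
    werm P m a₀ a₁ Y ≤ werm P m a₀ a₁ X :=
  setIntegral_mono_on (integrableOn_entropic P ha₀ m hY) (integrableOn_entropic P ha₀ m hX)
    measurableSet_Icc fun _ ha => entropic_anti P hX hY hXY (ha₀.le.trans ha.1)

lemma eint_eq_coe (P : Measure Ω) {f : Ω → ℝ} (hf : Integrable f P) :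
    eint P f = ((∫ ω, f ω ∂P : ℝ) : EReal) := by
  have h1 : ∫⁻ ω, ENNReal.ofReal (f ω) ∂P ≠ ⊤ := hf.lintegral_lt_top.ne
  have h2 : ∫⁻ ω, ENNReal.ofReal (-(f ω)) ∂P ≠ ⊤ := hf.neg.lintegral_lt_top.ne
  rw [integral_eq_lintegral_pos_part_sub_lintegral_neg_part hf, eint, EReal.coe_sub,
    EReal.coe_ennreal_toReal h1, EReal.coe_ennreal_toReal h2]

/-- A real value of `eint` excludes an infinite positive or negative part, since `⊤ - ⊤ = ⊥` in
`EReal`. -/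
lemma integrable_of_eint_eq_coe (P : Measure Ω) {f : Ω → ℝ} (hf : AEStronglyMeasurable f P)
    {r : ℝ} (h : eint P f = (r : EReal)) : Integrable f P := by
  rw [eint] at h
  have h1 : ∫⁻ ω, ENNReal.ofReal (f ω) ∂P ≠ ⊤ := by
    intro h1
    rw [h1, EReal.coe_ennreal_top] at h
    induction hz : ((∫⁻ ω, ENNReal.ofReal (-(f ω)) ∂P : ℝ≥0∞) : EReal) <;>
      rw [hz] at h <;> simp at h
  have h2 : ∫⁻ ω, ENNReal.ofReal (-(f ω)) ∂P ≠ ⊤ := by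
    intro h2
    rw [h2, EReal.coe_ennreal_top, EReal.sub_top] at h
    simp at h
  refine ⟨hf, ?_⟩
  rw [hasFiniteIntegral_iff_norm]
  have : ∀ ω, ENNReal.ofReal ‖f ω‖ ≤ ENNReal.ofReal (f ω) + ENNReal.ofReal (-(f ω)) := by
    intro ω
    rcases le_total 0 (f ω) with h | h
    · rw [Real.norm_of_nonneg h]; exact le_self_add
    · rw [Real.norm_of_nonpos h]; exact le_add_self
  refine (lintegral_mono this).trans_lt ?_
  rw [lintegral_add_left' hf.aemeasurable.ennreal_ofReal]
  exact ENNReal.add_lt_top.2 ⟨h1.lt_top, h2.lt_top⟩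

lemma fullObj_eq_coe (P : Measure Ω) (m : Measure ℝ) (a₀ a₁ : ℝ) (ρ : Ω → ℝ) (U : ℝ → ℝ)
    (μ lam : ℝ) {X : Ω → ℝ} (hU : Integrable (fun ω => U (X ω)) P)
    (hρX : Integrable (fun ω => ρ ω * X ω) P) (h0 : ∀ᵐ ω ∂P, 0 ≤ ρ ω * X ω) :
    fullObj P m a₀ a₁ ρ U μ lam X =
      ((∫ ω, U (X ω) ∂P - μ * werm P m a₀ a₁ X - lam * ∫ ω, ρ ω * X ω ∂P : ℝ) : EReal) := by
  rw [fullObj, eutil, eint_eq_coe P hU, budget, ← ofReal_integral_eq_lintegral_ofReal hρX h0,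
    EReal.coe_ennreal_ofReal, max_eq_left (integral_nonneg_of_ae h0)]
  push_cast
  rfl

lemma integrable_of_fullObj_eq_coe (P : Measure Ω) (m : Measure ℝ) (a₀ a₁ : ℝ) (ρ : Ω → ℝ)
    (U : ℝ → ℝ) (μ lam : ℝ) (hlam : 0 < lam) {X : Ω → ℝ}
    (hU : AEStronglyMeasurable (fun ω => U (X ω)) P)
    (hρX : AEStronglyMeasurable (fun ω => ρ ω * X ω) P) (h0 : ∀ᵐ ω ∂P, 0 ≤ ρ ω * X ω)
    {r : ℝ} (h : fullObj P m a₀ a₁ ρ U μ lam X = (r : EReal)) :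
    Integrable (fun ω => U (X ω)) P ∧ Integrable (fun ω => ρ ω * X ω) P := by
  rw [fullObj] at h
  have hb : budget P ρ X ≠ ⊤ := by
    intro hb
    rw [hb, EReal.coe_ennreal_top, EReal.coe_mul_top_of_pos hlam, EReal.sub_top] at h
    simp at h
  refine ⟨?_, ?_⟩
  · rw [← EReal.coe_ennreal_toReal hb, ← EReal.coe_mul] at h
    induction hz : eutil P U X with
    | bot => rw [hz] at h; simp at h
    | top => rw [hz, EReal.top_sub_coe, EReal.top_sub_coe] at h; simp at h
    | coe z => exact integrable_of_eint_eq_coe P hU hz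
  · refine ⟨hρX, ?_⟩
    rw [hasFiniteIntegral_iff_ofReal h0]
    exact hb.lt_top

/-- The Inada condition at `0` makes the difference quotients of `U` at `0` unbounded. -/
lemma exists_slope_gt (U U' : ℝ → ℝ) (hUc : ContinuousOn U (Set.Ici 0))
    (hUd : ∀ y : ℝ, 0 < y → HasDerivAt U (U' y) y)
    (hInada0 : Tendsto U' (nhdsWithin 0 (Set.Ioi 0)) atTop) (K : ℝ) :
    ∃ ε : ℝ, 0 < ε ∧ K * ε < U ε - U 0 := by
  obtain ⟨ε, hε, hsub⟩ := mem_nhdsGT_iff_exists_Ioo_subset.1 (hInada0.eventually_gt_atTop K)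
  have hε : 0 < ε := hε
  obtain ⟨c, hc, hcs⟩ := exists_hasDerivAt_eq_slope U U' hε
    (hUc.mono fun x hx => hx.1) fun x hx => hUd x hx.1
  have hK : K < U' c := hsub hc
  rw [hcs, sub_zero, lt_div_iff₀ hε] at hK
  exact ⟨ε, hε, hK⟩

/-- a maximizer of `E[U(X)] - μ h(X) - λ E[ρX]` over `L⁰₊` (with finite
supremum) is a.s. strictly positive. -/
theorem eu_lagrangian_maximizer_pos (P : Measure Ω) [IsProbabilityMeasure P]
    (a₀ a₁ : ℝ) (ha₀ : 0 < a₀) (ha₀₁ : a₀ < a₁)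
    (m : Measure ℝ) [IsProbabilityMeasure m] (hm : m (Set.Icc a₀ a₁) = 1)
    (ρ : Ω → ℝ) (hmρ : Measurable ρ) (hρ0 : ∀ᵐ ω ∂P, 0 < ρ ω) (hρint : Integrable ρ P)
    (U U' : ℝ → ℝ)
    (hUc : ContinuousOn U (Set.Ici 0))
    (hUd : ∀ y : ℝ, 0 < y → HasDerivAt U (U' y) y)
    (hU'c : ContinuousOn U' (Set.Ioi 0))
    (hUmono : StrictMonoOn U (Set.Ioi 0))
    (hUconc : StrictConcaveOn ℝ (Set.Ioi 0) U)
    (hInada0 : Tendsto U' (nhdsWithin 0 (Set.Ioi 0)) atTop)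
    (hInadaInf : Tendsto U' atTop (nhds 0))
    (μ lam : ℝ) (hμ : 0 < μ) (hlam : 0 < lam)
    (hfin : ∃ r : ℝ, sSup (fullObj P m a₀ a₁ ρ U μ lam '' {X | Lpos P X}) = (r : EReal))
    (X : Ω → ℝ) (hX : Lpos P X)
    (hXmax : ∀ Y, Lpos P Y →
      fullObj P m a₀ a₁ ρ U μ lam Y ≤ fullObj P m a₀ a₁ ρ U μ lam X) :
    ∀ᵐ ω ∂P, 0 < X ω := by
  obtain ⟨r, hr⟩ := hfin
  -- A maximizer attains the finite supremum.
  have hXr : fullObj P m a₀ a₁ ρ U μ lam X = (r : EReal) := by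
    rw [← hr]
    refine le_antisymm (le_sSup ⟨X, hX, rfl⟩) (sSup_le ?_)
    rintro _ ⟨Y, hY, rfl⟩
    exact hXmax Y hY
  have h0 : ∀ᵐ ω ∂P, 0 ≤ ρ ω * X ω := by
    filter_upwards [hρ0, hX.2] with ω h1 h2
    exact mul_nonneg h1.le h2
  have hXm := hX.1
  -- `U` is only continuous on `[0, ∞)`, so it is composed with the retraction `x ↦ max x 0`.
  have hUX : AEStronglyMeasurable (fun ω => U (X ω)) P := by
    have hc : Continuous fun x : ℝ => U (max x 0) :=
      hUc.comp_continuous (by fun_prop) fun x => le_max_right x 0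
    refine (hc.measurable.comp hXm).aestronglyMeasurable.congr ?_
    filter_upwards [hX.2] with ω h
    simp [max_eq_left h]
  obtain ⟨hUi, hρi⟩ := integrable_of_fullObj_eq_coe P m a₀ a₁ ρ U μ lam hlam hUX
    (hmρ.mul hXm).aestronglyMeasurable h0 hXr
  set A : Set Ω := {ω | X ω ≤ 0} with hA
  have hAm : MeasurableSet A := measurableSet_le hXm measurable_const
  suffices hPA : P A = 0 by
    rw [ae_iff]
    simpa only [not_lt] using hPA
  by_contra hPA
  have hp : 0 < P.real A := ENNReal.toReal_pos hPA (measure_ne_top P A)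
  obtain ⟨ε, hε, hslope⟩ := exists_slope_gt U U' hUc hUd hInada0
    (lam * (∫ ω, ρ ω ∂P) / P.real A)
  have hAc : ∀ᵐ ω ∂P, ω ∈ A → X ω = 0 := by
    filter_upwards [hX.2] with ω h h'
    exact le_antisymm h' h
  set Y : Ω → ℝ := fun ω => X ω + A.indicator (fun _ => ε) ω with hYdef
  have hXY : ∀ ω, X ω ≤ Y ω := fun ω => by
    simpa [hYdef] using Set.indicator_nonneg (fun _ _ => hε.le) ω
  have hY : Lpos P Y := by
    refine ⟨hXm.add (measurable_const.indicator hAm), ?_⟩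
    filter_upwards [hX.2] with ω h
    exact h.trans (hXY ω)
  have hUY : (fun ω => U (Y ω)) =ᵐ[P]
      fun ω => U (X ω) + A.indicator (fun _ => U ε - U 0) ω := by
    filter_upwards [hAc] with ω h
    by_cases hω : ω ∈ A
    · simp [hYdef, hω, h hω]
    · simp [hYdef, hω]
  have hρY : (fun ω => ρ ω * Y ω) =
      fun ω => ρ ω * X ω + A.indicator (fun ω => ρ ω * ε) ω := by
    funext ω
    by_cases hω : ω ∈ A
    · simp [hYdef, hω, mul_add]
    · simp [hYdef, hω]
  have hI1 : Integrable (A.indicator fun _ => U ε - U 0) P :=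
    (integrable_const _).indicator hAm
  have hI2 : Integrable (A.indicator fun ω => ρ ω * ε) P := (hρint.mul_const ε).indicator hAm
  have hUYi : Integrable (fun ω => U (Y ω)) P := (hUi.add hI1).congr hUY.symm
  have hρYi : Integrable (fun ω => ρ ω * Y ω) P := by
    rw [hρY]
    exact hρi.add hI2
  have h0Y : ∀ᵐ ω ∂P, 0 ≤ ρ ω * Y ω := by
    filter_upwards [hρ0, hY.2] with ω h1 h2
    exact mul_nonneg h1.le h2
  have hle := hXmax Y hY
  rw [fullObj_eq_coe P m a₀ a₁ ρ U μ lam hUYi hρYi h0Y,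
    fullObj_eq_coe P m a₀ a₁ ρ U μ lam hUi hρi h0, EReal.coe_le_coe_iff, integral_congr_ae hUY,
    hρY, integral_add hUi hI1, integral_add hρi hI2, integral_indicator_const _ hAm,
    smul_eq_mul] at hle
  have hw := mul_le_mul_of_nonneg_left (werm_anti P (a₁ := a₁) ha₀ m hX hY (.of_forall hXY)) hμ.le
  have hcost : ∫ ω, A.indicator (fun ω => ρ ω * ε) ω ∂P ≤ (∫ ω, ρ ω ∂P) * ε := by
    rw [← integral_mul_const]
    refine integral_mono_ae hI2 (hρint.mul_const ε) ?_
    filter_upwards [hρ0] with ω h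
    exact Set.indicator_apply_le' (fun _ => le_rfl) fun _ => by positivity
  have hcost' := mul_le_mul_of_nonneg_left hcost hlam.le
  have hgain : lam * ((∫ ω, ρ ω ∂P) * ε) < P.real A * (U ε - U 0) := by
    have := mul_lt_mul_of_pos_left hslope hp
    calc lam * ((∫ ω, ρ ω ∂P) * ε)
        = P.real A * (lam * (∫ ω, ρ ω ∂P) / P.real A * ε) := by field_simp
      _ < _ := this
  linarith
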